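/- Fix a real number t with 0 < t < 1. Given an admissible labeling (a,b,e;c,d,f) of the edges of a tetrahedron, the sequence k ↦ t^{−4k}·{a+2k, b+2k, e; c+2k, d+2k, f}_u of scaled unitary 6j-symbols converges as k → ∞. -/

import Mathlib

open Filter Finset

/-- A triple of nonnegative integers is admissible if its sum is even and
it satisfies every triangle inequality. -/
def Admissible (a b c : ℕ) : Prop :=
  Even (a + b + c) ∧ a ≤ b + c ∧ b ≤ a + c ∧ c ≤ a + b

/-- A labeling (a,b,e;c,d,f) of the edges of a tetrahedron is admissible if the
four vertex triples (a,d,e), (b,c,e), (a,b,f), (c,d,f) are admissible. -/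
def TetAdmissible (a b e c d f : ℕ) : Prop :=
  Admissible a d e ∧ Admissible b c e ∧ Admissible a b f ∧ Admissible c d f

/-- The quantized integer `[n] = (t^{2n} - t^{-2n})/(t^2 - t^{-2})`. -/
noncomputable def qint (t : ℝ) (n : ℕ) : ℝ :=
  (t ^ (2 * n) - (t ^ (2 * n))⁻¹) / (t ^ 2 - (t ^ 2)⁻¹)

/-- The quantized factorial `[n]! = [n]·[n-1]!`, `[0]! = 1`. -/
noncomputable def qfact (t : ℝ) : ℕ → ℝ
  | 0 => 1
  | n + 1 => qint t (n + 1) * qfact t n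

/-- `θ(a,b,c)` for an admissible triple. -/
noncomputable def qtheta (t : ℝ) (a b c : ℕ) : ℝ :=
  (-1 : ℝ) ^ ((a + b + c) / 2) *
    (qfact t ((a + b + c) / 2 + 1) * qfact t ((a + b - c) / 2) *
      qfact t ((a + c - b) / 2) * qfact t ((b + c - a) / 2)) /
    (qfact t a * qfact t b * qfact t c)

/-- Product of the quantized factorials of the strand numbers of a triple. -/
noncomputable def strandProd (t : ℝ) (a b c : ℕ) : ℝ :=
  qfact t ((a + b - c) / 2) * qfact t ((b + c - a) / 2) * qfact t ((a + c - b) / 2)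

/-- The tetrahedral coefficient `Tet(a,b,e;c,d,f)`. -/
noncomputable def Tet (t : ℝ) (a b e c d f : ℕ) : ℝ :=
  (strandProd t a d e * strandProd t b c e * strandProd t a b f * strandProd t c d f) /
      (qfact t a * qfact t b * qfact t c * qfact t d * qfact t e * qfact t f) *
    ∑ s ∈ Finset.Icc
        (max ((a + d + e) / 2) (max ((b + c + e) / 2) (max ((a + b + f) / 2) ((c + d + f) / 2))))
        (min ((a + b + c + d) / 2) (min ((a + c + e + f) / 2) ((b + d + e + f) / 2))),
      ((-1 : ℝ) ^ s * qfact t (s + 1)) /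
        (qfact t ((a + b + c + d) / 2 - s) * qfact t ((a + c + e + f) / 2 - s) *
          qfact t ((b + d + e + f) / 2 - s) *
          qfact t (s - (a + d + e) / 2) * qfact t (s - (b + c + e) / 2) *
          qfact t (s - (a + b + f) / 2) * qfact t (s - (c + d + f) / 2))

/-- The unitary 6j-symbol `{a,b,e;c,d,f}_u`. -/
noncomputable def sixj (t : ℝ) (a b e c d f : ℕ) : ℝ :=
  Tet t a b e c d f /
    Real.sqrt (qtheta t a d e * qtheta t b c e * qtheta t a b f * qtheta t c d f)

/-- The q-Pochhammer symbol `(x;q)_n`. -/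
noncomputable def qPoch (x q : ℝ) (n : ℕ) : ℝ := ∏ i ∈ Finset.range n, (1 - x * q ^ i)

/-- The infinite q-Pochhammer symbol `(x;q)_∞`. -/
noncomputable def qPochInf (x q : ℝ) : ℝ := ∏' i : ℕ, (1 - x * q ^ i)

/-!
A quantized integer satisfies `[n] ∼ c t^(-2n)`, so `[n + x]! ∼ c_x [n]! t^(-2nx)` for every fixed
integer `x`. Let `a, b, c, d` grow by `n`. All powers of `[n]!` then cancel in the closed
formulas: up to the sign `(-1)^n`, the `θ` of each vertex is `∼ c t^(-2n)`, and the factor of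
`Tet` in front of the sum is `∼ c t^(2n(e + f))`. The summand of index `s + n` is, up to the same
sign, `∼ c t^(2n(B₁ - 2s - 1))`. Since `e + f + B₁ = B₂ + B₃` and `s ≤ min B₂ B₃`, each term of
`t^(2n) Tet` is, up to sign, `∼ c t^(2np)` with `p = B₂ + B₃ - 2s ≥ 0` and so converges, while the
square root of the product of the four `θ`s is `∼ c t^(-4n)`.
-/

theorem pow_sub_inv_pow_neg {t : ℝ} (ht : t ∈ Set.Ioo 0 1) {m : ℕ} (hm : m ≠ 0) :
    t ^ m - (t ^ m)⁻¹ < 0 := by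
  have hlt : t ^ m < 1 := pow_lt_one₀ ht.1.le ht.2 hm
  exact sub_neg.2 (hlt.trans ((one_lt_inv₀ (pow_pos ht.1 m)).2 hlt))

theorem qint_pos {t : ℝ} (ht : t ∈ Set.Ioo 0 1) {n : ℕ} (hn : n ≠ 0) : 0 < qint t n :=
  div_pos_of_neg_of_neg (pow_sub_inv_pow_neg ht (mul_ne_zero two_ne_zero hn))
    (pow_sub_inv_pow_neg ht two_ne_zero)

theorem qfact_pos {t : ℝ} (ht : t ∈ Set.Ioo 0 1) (n : ℕ) : 0 < qfact t n := by
  induction n with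
  | zero => exact one_pos
  | succ n ih => exact mul_pos (qint_pos ht n.succ_ne_zero) ih

theorem qfact_ne_zero {t : ℝ} (ht : t ∈ Set.Ioo 0 1) (n : ℕ) : qfact t n ≠ 0 :=
  (qfact_pos ht n).ne'

theorem tendsto_pow_two_mul_atTop_nhds_zero {t : ℝ} (ht : t ∈ Set.Ioo 0 1) :
    Tendsto (fun n : ℕ => t ^ (2 * n)) atTop (nhds 0) := by
  simp_rw [pow_mul]
  exact tendsto_pow_atTop_nhds_zero_of_lt_one (sq_nonneg t) (pow_lt_one₀ ht.1.le ht.2 two_ne_zero)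

theorem tendsto_pow_two_mul_mul_qint {t : ℝ} (ht : t ∈ Set.Ioo 0 1) :
    Tendsto (fun n => t ^ (2 * n) * qint t n) atTop (nhds (-1 / (t ^ 2 - (t ^ 2)⁻¹))) := by
  have hpow := tendsto_pow_two_mul_atTop_nhds_zero ht
  have hnum : Tendsto (fun n : ℕ => t ^ (2 * n) * t ^ (2 * n) - 1) atTop (nhds (-1)) := by
    simpa using (hpow.mul hpow).sub_const 1
  refine (hnum.div_const (t ^ 2 - (t ^ 2)⁻¹)).congr fun n => ?_
  rw [qint, ← mul_div_assoc, mul_sub, mul_inv_cancel₀ (pow_pos ht.1 _).ne']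

/-- The sequence `f` is asymptotic to a nonzero multiple of `([n]!)^i * t^(2nm)`. Both exponents are
integers, so that these sequences are closed under products and quotients. -/
def HasQGrowth (t : ℝ) (f : ℕ → ℝ) (i m : ℤ) : Prop :=
  ∃ c : ℝ, c ≠ 0 ∧
    Tendsto (fun n => f n / (qfact t n ^ i * (t ^ (2 * n)) ^ m)) atTop (nhds c)

namespace HasQGrowth

variable {t : ℝ} {f g : ℕ → ℝ} {i j m k : ℤ}

theorem congr' (hf : HasQGrowth t f i m) (hfg : f =ᶠ[atTop] g) : HasQGrowth t g i m := by
  obtain ⟨c, hc, hlim⟩ := hf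
  exact ⟨c, hc, hlim.congr' (hfg.mono fun n hn => by rw [hn])⟩

theorem const_mul {a : ℝ} (ha : a ≠ 0) (hf : HasQGrowth t f i m) :
    HasQGrowth t (fun n => a * f n) i m := by
  obtain ⟨c, hc, hlim⟩ := hf
  exact ⟨a * c, mul_ne_zero ha hc, by simpa only [mul_div_assoc] using hlim.const_mul a⟩

theorem mul (ht : t ∈ Set.Ioo 0 1) (hf : HasQGrowth t f i m) (hg : HasQGrowth t g j k) :
    HasQGrowth t (fun n => f n * g n) (i + j) (m + k) := by
  obtain ⟨c, hc, hf⟩ := hf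
  obtain ⟨d, hd, hg⟩ := hg
  refine ⟨c * d, mul_ne_zero hc hd, (hf.mul hg).congr fun n => ?_⟩
  rw [zpow_add₀ (qfact_ne_zero ht n), zpow_add₀ (pow_pos ht.1 _).ne', div_mul_div_comm,
    mul_mul_mul_comm]

theorem inv (hf : HasQGrowth t f i m) : HasQGrowth t (fun n => (f n)⁻¹) (-i) (-m) := by
  obtain ⟨c, hc, hf⟩ := hf
  refine ⟨c⁻¹, inv_ne_zero hc, (hf.inv₀ hc).congr fun n => ?_⟩
  rw [zpow_neg, zpow_neg, ← mul_inv, inv_div_inv, inv_div]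

theorem div (ht : t ∈ Set.Ioo 0 1) (hf : HasQGrowth t f i m) (hg : HasQGrowth t g j k) :
    HasQGrowth t (fun n => f n / g n) (i - j) (m - k) := by
  simpa only [div_eq_mul_inv, sub_eq_add_neg] using hf.mul ht hg.inv

theorem pow_two_mul (ht : t ≠ 0) : HasQGrowth t (fun n => t ^ (2 * n)) 0 1 :=
  ⟨1, one_ne_zero, tendsto_const_nhds.congr fun n => by
    rw [zpow_zero, one_mul, zpow_one, div_self (pow_ne_zero _ ht)]⟩

theorem qint_add_sub (ht : t ∈ Set.Ioo 0 1) (x y : ℕ) :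
    HasQGrowth t (fun n => qint t (n + x - y)) 0 (-1) := by
  have hshift : Tendsto (fun n => n + x - y) atTop atTop :=
    (tendsto_sub_atTop_nat y).comp (tendsto_add_atTop_nat x)
  have hlim := ((tendsto_pow_two_mul_mul_qint ht).comp hshift).const_mul (t ^ (2 * y) / t ^ (2 * x))
  have htx : t ^ (2 * x) ≠ 0 := (pow_pos ht.1 _).ne'
  refine ⟨_, mul_ne_zero (div_ne_zero (pow_pos ht.1 _).ne' htx)
    (div_ne_zero (neg_ne_zero.2 one_ne_zero) (pow_sub_inv_pow_neg ht two_ne_zero).ne),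
    hlim.congr' ?_⟩
  filter_upwards [eventually_ge_atTop y] with n hn
  have hpow : t ^ (2 * y) * t ^ (2 * (n + x - y)) = t ^ (2 * n) * t ^ (2 * x) := by
    rw [← pow_add, ← pow_add]
    congr 1
    omega
  rw [Function.comp_apply, ← mul_assoc, div_mul_eq_mul_div, hpow, mul_div_cancel_right₀ _ htx,
    zpow_zero, one_mul, zpow_neg_one, div_inv_eq_mul, mul_comm]

theorem qfact_add_sub (ht : t ∈ Set.Ioo 0 1) (x y : ℕ) :
    HasQGrowth t (fun n => qfact t (n + x - y)) 1 (y - x) := by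
  induction y with
  | zero =>
    induction x with
    | zero =>
      refine ⟨1, one_ne_zero, tendsto_const_nhds.congr fun n => ?_⟩
      simp [qfact_ne_zero ht]
    | succ x ih =>
      convert (qint_add_sub ht (x + 1) 0).mul ht ih using 1
      · rfl
      · norm_num
      · push_cast
        ring
  | succ y ih =>
    have hdiv := ih.div ht (qint_add_sub ht x y)
    rw [sub_zero, sub_neg_eq_add, sub_add_eq_add_sub] at hdiv
    rw [Nat.cast_succ]
    refine hdiv.congr' ?_
    filter_upwards [eventually_gt_atTop y] with n hn
    rw [show n + x - y = n + x - (y + 1) + 1 by omega, qfact,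
      mul_div_cancel_left₀ _ (qint_pos ht (Nat.succ_ne_zero _)).ne']

theorem qfact_add (ht : t ∈ Set.Ioo 0 1) (x : ℕ) :
    HasQGrowth t (fun n => qfact t (x + n)) 1 (-x) := by
  simpa [add_comm] using qfact_add_sub ht x 0

theorem exists_tendsto_ne_zero (hf : HasQGrowth t f 0 0) :
    ∃ c ≠ 0, Tendsto f atTop (nhds c) := by
  simpa [HasQGrowth] using hf

theorem exists_tendsto (ht : t ∈ Set.Ioo 0 1) (hf : HasQGrowth t f 0 m) (hm : 0 ≤ m) :
    ∃ L, Tendsto f atTop (nhds L) := by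
  obtain ⟨c, -, hlim⟩ := hf
  lift m to ℕ using hm
  refine ⟨c * 0 ^ m, (hlim.mul ((tendsto_pow_two_mul_atTop_nhds_zero ht).pow m)).congr fun n => ?_⟩
  rw [zpow_zero, one_mul, zpow_natCast, div_mul_cancel₀ _ (pow_pos (pow_pos ht.1 _) m).ne']

end HasQGrowth

theorem neg_one_pow_mul_neg_one_pow_add {R : Type*} [CommMonoid R] [HasDistribNeg R] (s n : ℕ) :
    (-1 : R) ^ n * (-1) ^ (s + n) = (-1) ^ s := by
  rw [pow_add, mul_left_comm, ← mul_pow, neg_mul_neg, one_mul, one_pow, mul_one]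

theorem strandProd_add (t : ℝ) {a b e : ℕ} (he : e ≤ a + b) (n : ℕ) :
    strandProd t (a + n) (b + n) e =
      qfact t ((b + e - a) / 2) * qfact t ((a + e - b) / 2) * qfact t ((a + b - e) / 2 + n) := by
  rw [strandProd, show (a + n + (b + n) - e) / 2 = (a + b - e) / 2 + n by omega,
    show b + n + e - (a + n) = b + e - a by omega, show a + n + e - (b + n) = a + e - b by omega]
  ring

theorem neg_one_pow_mul_qtheta_add (t : ℝ) (a b e n : ℕ) :
    (-1) ^ n * qtheta t (a + n) (b + n) e =
      (-1) ^ ((a + b + e) / 2) / qfact t e *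
        (qfact t ((a + b + e) / 2 + 1 + n) * strandProd t (a + n) (b + n) e /
          (qfact t (a + n) * qfact t (b + n))) := by
  rw [qtheta, strandProd, show (a + n + (b + n) + e) / 2 = (a + b + e) / 2 + n by omega,
    ← mul_div_assoc, ← mul_assoc, neg_one_pow_mul_neg_one_pow_add, add_right_comm _ n 1]
  ring

namespace Admissible

variable {t : ℝ} {a b e : ℕ}

theorem two_mul_strand (h : Admissible a b e) : 2 * ((a + b - e) / 2) + e = a + b := by
  have hhalf := Nat.two_mul_div_two_of_even h.1
  have hle := h.2.2.2
  omega

theorem hasQGrowth_strandProd (ht : t ∈ Set.Ioo 0 1) (h : Admissible a b e) :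
    HasQGrowth t (fun n => strandProd t (a + n) (b + n) e) 1 (-((a + b - e) / 2 : ℕ)) := by
  simp only [strandProd_add t h.2.2.2]
  exact (HasQGrowth.qfact_add ht _).const_mul
    (mul_ne_zero (qfact_ne_zero ht _) (qfact_ne_zero ht _))

theorem exists_tendsto_qtheta (ht : t ∈ Set.Ioo 0 1) (h : Admissible a b e) :
    ∃ c ≠ 0, Tendsto (fun n => t ^ (2 * n) * ((-1) ^ n * qtheta t (a + n) (b + n) e))
      atTop (nhds c) := by
  simp only [neg_one_pow_mul_qtheta_add]
  have hratio := (((HasQGrowth.qfact_add ht ((a + b + e) / 2 + 1)).mul ht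
    (h.hasQGrowth_strandProd ht)).div ht
      ((HasQGrowth.qfact_add ht a).mul ht (HasQGrowth.qfact_add ht b))).const_mul
    (div_ne_zero (pow_ne_zero ((a + b + e) / 2) (neg_ne_zero.2 one_ne_zero)) (qfact_ne_zero ht e))
  have hhalf := Nat.two_mul_div_two_of_even h.1
  have hstrand := h.two_mul_strand
  apply HasQGrowth.exists_tendsto_ne_zero
  convert (HasQGrowth.pow_two_mul ht.1.ne').mul ht hratio using 1
  · norm_num
  · omega

end Admissible

/-- The factor in front of the sum in the tetrahedral coefficient. -/
noncomputable def tetPrefactor (t : ℝ) (a b e c d f : ℕ) : ℝ :=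
  (strandProd t a d e * strandProd t b c e * strandProd t a b f * strandProd t c d f) /
    (qfact t a * qfact t b * qfact t c * qfact t d * qfact t e * qfact t f)

/-- The summand with index `s` in the tetrahedral coefficient. -/
noncomputable def tetSummand (t : ℝ) (a b e c d f s : ℕ) : ℝ :=
  ((-1 : ℝ) ^ s * qfact t (s + 1)) /
    (qfact t ((a + b + c + d) / 2 - s) * qfact t ((a + c + e + f) / 2 - s) *
      qfact t ((b + d + e + f) / 2 - s) *
      qfact t (s - (a + d + e) / 2) * qfact t (s - (b + c + e) / 2) *
      qfact t (s - (a + b + f) / 2) * qfact t (s - (c + d + f) / 2))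

/-- The range of summation of the tetrahedral coefficient without the bound
`s ≤ (a + b + c + d) / 2`. That bound grows by `2n` when `a, b, c, d` grow by `n`, and all others by
`n`, so for large `n` the range of the enlarged labeling is the translate by `n` of this set. -/
def tetRange (a b e c d f : ℕ) : Finset ℕ :=
  Finset.Icc
    (max ((a + d + e) / 2) (max ((b + c + e) / 2) (max ((a + b + f) / 2) ((c + d + f) / 2))))
    (min ((a + c + e + f) / 2) ((b + d + e + f) / 2))

theorem Tet_add (t : ℝ) (a b e c d f : ℕ) {n : ℕ} (hn : e + f ≤ n) :
    Tet t (a + n) (b + n) e (c + n) (d + n) f =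
      tetPrefactor t (a + n) (b + n) e (c + n) (d + n) f *
        ∑ s ∈ tetRange a b e c d f, tetSummand t (a + n) (b + n) e (c + n) (d + n) f (s + n) := by
  have hrange : Finset.Icc
      (max ((a + n + (d + n) + e) / 2) (max ((b + n + (c + n) + e) / 2)
        (max ((a + n + (b + n) + f) / 2) ((c + n + (d + n) + f) / 2))))
      (min ((a + n + (b + n) + (c + n) + (d + n)) / 2)
        (min ((a + n + (c + n) + e + f) / 2) ((b + n + (d + n) + e + f) / 2))) =
      (tetRange a b e c d f).map (addRightEmbedding n) := by
    rw [tetRange, Finset.map_add_right_Icc]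
    congr 1 <;> omega
  rw [Tet, hrange, Finset.sum_map]
  rfl

theorem neg_one_pow_mul_tetSummand_add (t : ℝ) (a b e c d f s n : ℕ) :
    (-1) ^ n * tetSummand t (a + n) (b + n) e (c + n) (d + n) f (s + n) =
      (-1) ^ s / (qfact t ((a + c + e + f) / 2 - s) * qfact t ((b + d + e + f) / 2 - s) *
          qfact t (s - (a + d + e) / 2) * qfact t (s - (b + c + e) / 2) *
          qfact t (s - (a + b + f) / 2) * qfact t (s - (c + d + f) / 2)) *
        (qfact t (s + 1 + n) / qfact t (n + (a + b + c + d) / 2 - s)) := by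
  have hA (x y z : ℕ) : s + n - (x + n + (y + n) + z) / 2 = s - (x + y + z) / 2 := by omega
  have hB (x y : ℕ) : (x + n + (y + n) + e + f) / 2 - (s + n) = (x + y + e + f) / 2 - s := by omega
  have hB₁ : (a + n + (b + n) + (c + n) + (d + n)) / 2 - (s + n) =
      n + (a + b + c + d) / 2 - s := by omega
  rw [tetSummand, ← mul_div_assoc, ← mul_assoc, neg_one_pow_mul_neg_one_pow_add,
    add_right_comm s n 1, hB₁]
  simp only [hA, hB]
  ring

theorem hasQGrowth_tetSummand {t : ℝ} (ht : t ∈ Set.Ioo 0 1) (a b e c d f s : ℕ) :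
    HasQGrowth t
      (fun n => (-1) ^ n * tetSummand t (a + n) (b + n) e (c + n) (d + n) f (s + n))
      0 (((a + b + c + d) / 2 : ℕ) - 2 * s - 1) := by
  simp only [neg_one_pow_mul_tetSummand_add]
  convert ((HasQGrowth.qfact_add ht (s + 1)).div ht
    (HasQGrowth.qfact_add_sub ht ((a + b + c + d) / 2) s)).const_mul
      (div_ne_zero (pow_ne_zero s (neg_ne_zero.2 one_ne_zero)) ?_) using 1
  · norm_num
  · push_cast
    ring
  · simp only [ne_eq, mul_eq_zero, qfact_ne_zero ht, or_self, not_false_eq_true]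

namespace TetAdmissible

variable {t : ℝ} {a b e c d f : ℕ}

theorem hasQGrowth_tetPrefactor (ht : t ∈ Set.Ioo 0 1) (h : TetAdmissible a b e c d f) :
    HasQGrowth t (fun n => tetPrefactor t (a + n) (b + n) e (c + n) (d + n) f) 0 (e + f) := by
  obtain ⟨hade, hbce, habf, hcdf⟩ := h
  have hstrands := (((hade.hasQGrowth_strandProd ht).mul ht (hbce.hasQGrowth_strandProd ht)).mul ht
    (habf.hasQGrowth_strandProd ht)).mul ht (hcdf.hasQGrowth_strandProd ht)
  have hqfact := HasQGrowth.qfact_add ht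
  have hedges := (((hqfact a).mul ht (hqfact b)).mul ht (hqfact c)).mul ht (hqfact d)
  have hade_strand := hade.two_mul_strand
  have hbce_strand := hbce.two_mul_strand
  have habf_strand := habf.two_mul_strand
  have hcdf_strand := hcdf.two_mul_strand
  convert (hstrands.div ht hedges).const_mul
    (inv_ne_zero (mul_ne_zero (qfact_ne_zero ht e) (qfact_ne_zero ht f))) using 1
  · funext n
    rw [tetPrefactor]
    ring
  · norm_num
  · omega

theorem half_sum_add (h : TetAdmissible a b e c d f) :
    e + f + (a + b + c + d) / 2 = (a + c + e + f) / 2 + (b + d + e + f) / 2 := by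
  obtain ⟨hade, hbce, habf, hcdf⟩ := h
  have hade_half := Nat.two_mul_div_two_of_even hade.1
  have hbce_half := Nat.two_mul_div_two_of_even hbce.1
  have habf_half := Nat.two_mul_div_two_of_even habf.1
  have hcdf_half := Nat.two_mul_div_two_of_even hcdf.1
  omega

theorem exists_tendsto_tetPrefactor_mul_tetSummand (ht : t ∈ Set.Ioo 0 1)
    (h : TetAdmissible a b e c d f) {s : ℕ} (hs : s ∈ tetRange a b e c d f) :
    ∃ L, Tendsto (fun n => t ^ (2 * n) * (tetPrefactor t (a + n) (b + n) e (c + n) (d + n) f *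
      ((-1) ^ n * tetSummand t (a + n) (b + n) e (c + n) (d + n) f (s + n)))) atTop (nhds L) := by
  have hgrowth := (HasQGrowth.pow_two_mul ht.1.ne').mul ht
    ((h.hasQGrowth_tetPrefactor ht).mul ht (hasQGrowth_tetSummand ht a b e c d f s))
  rw [add_zero, add_zero] at hgrowth
  refine hgrowth.exists_tendsto ht ?_
  have hsum := h.half_sum_add
  obtain ⟨hs₂, hs₃⟩ := le_min_iff.1 (Finset.mem_Icc.1 hs).2
  omega

theorem exists_tendsto_Tet (ht : t ∈ Set.Ioo 0 1) (h : TetAdmissible a b e c d f) :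
    ∃ L, Tendsto (fun n => t ^ (2 * n) * ((-1) ^ n *
      Tet t (a + n) (b + n) e (c + n) (d + n) f)) atTop (nhds L) := by
  choose! L hL using fun s (hs : s ∈ tetRange a b e c d f) =>
    h.exists_tendsto_tetPrefactor_mul_tetSummand ht hs
  have hsum := tendsto_finsetSum _ hL
  refine ⟨_, hsum.congr' ?_⟩
  filter_upwards [eventually_ge_atTop (e + f)] with n hn
  rw [Tet_add t a b e c d f hn, mul_left_comm ((-1) ^ n), Finset.mul_sum, Finset.mul_sum,
    Finset.mul_sum]

theorem exists_tendsto_qtheta_mul (ht : t ∈ Set.Ioo 0 1) (h : TetAdmissible a b e c d f) :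
    ∃ c' ≠ 0, Tendsto (fun n => (t ^ (2 * n)) ^ 4 *
      (qtheta t (a + n) (d + n) e * qtheta t (b + n) (c + n) e * qtheta t (a + n) (b + n) f *
        qtheta t (c + n) (d + n) f)) atTop (nhds c') := by
  obtain ⟨hade, hbce, habf, hcdf⟩ := h
  obtain ⟨w, hw, hade⟩ := hade.exists_tendsto_qtheta ht
  obtain ⟨x, hx, hbce⟩ := hbce.exists_tendsto_qtheta ht
  obtain ⟨y, hy, habf⟩ := habf.exists_tendsto_qtheta ht
  obtain ⟨z, hz, hcdf⟩ := hcdf.exists_tendsto_qtheta ht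
  refine ⟨w * x * y * z, by positivity, (((hade.mul hbce).mul habf).mul hcdf).congr fun n => ?_⟩
  have hsign : ((-1 : ℝ) ^ n) ^ 4 = 1 := by
    rw [pow_right_comm, Even.neg_one_pow (by decide), one_pow]
  linear_combination (t ^ (2 * n)) ^ 4 *
    (qtheta t (a + n) (d + n) e * qtheta t (b + n) (c + n) e * qtheta t (a + n) (b + n) f *
      qtheta t (c + n) (d + n) f) * hsign

end TetAdmissible

/-- Since `√x = 0` for `x ≤ 0`, the limit is `0` when `c < 0`. This case does occur: the product of
the four `θ`s of a labeling is negative when `a + b + c + d + e + f` is odd. -/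
theorem exists_tendsto_inv_sqrt {α : Type*} {l : Filter α} {u : α → ℝ} {c : ℝ} (hc : c ≠ 0)
    (hu : Tendsto u l (nhds c)) : ∃ L, Tendsto (fun x => (√(u x))⁻¹) l (nhds L) := by
  rcases hc.lt_or_gt with hneg | hpos
  · refine ⟨0, tendsto_const_nhds.congr' ?_⟩
    filter_upwards [hu.eventually_lt_const hneg] with x hx
    rw [Real.sqrt_eq_zero_of_nonpos hx.le, inv_zero]
  · exact ⟨_, hu.sqrt.inv₀ (Real.sqrt_pos.2 hpos).ne'⟩

theorem stmt_12_general (t : ℝ) (ht0 : 0 < t) (ht1 : t < 1) (a b e c d f : ℕ)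
    (h : TetAdmissible a b e c d f) :
    ∃ L : ℝ, Tendsto
      (fun n => (-1) ^ n * (t ^ (2 * n))⁻¹ * sixj t (a + n) (b + n) e (c + n) (d + n) f)
      atTop (nhds L) := by
  obtain ⟨L, hL⟩ := h.exists_tendsto_Tet ⟨ht0, ht1⟩
  obtain ⟨θ, hθ, hlim⟩ := h.exists_tendsto_qtheta_mul ⟨ht0, ht1⟩
  obtain ⟨R, hR⟩ := exists_tendsto_inv_sqrt hθ hlim
  refine ⟨L * R, (hL.mul hR).congr fun n => ?_⟩
  have hsqrt : √((t ^ (2 * n)) ^ 4) = (t ^ (2 * n)) ^ 2 := by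
    rw [pow_mul (t ^ (2 * n)) 2 2, Real.sqrt_sq (sq_nonneg _)]
  rw [sixj, Real.sqrt_mul (by positivity), hsqrt]
  field_simp

/-- The sequence k ↦ t^{-4k}·{a+2k,b+2k,e;c+2k,d+2k,f}_u
converges. -/
theorem stmt_12 (t : ℝ) (ht0 : 0 < t) (ht1 : t < 1) (a b e c d f : ℕ)
    (h : TetAdmissible a b e c d f) :
    ∃ L : ℝ, Filter.Tendsto
      (fun k => (t ^ (4 * k))⁻¹ *
        sixj t (a + 2 * k) (b + 2 * k) e (c + 2 * k) (d + 2 * k) f)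
      Filter.atTop (nhds L) := by
  obtain ⟨L, hL⟩ := stmt_12_general t ht0 ht1 a b e c d f h
  refine ⟨L, (hL.comp (tendsto_id.const_mul_atTop' two_pos)).congr fun k => ?_⟩
  simp [← mul_assoc]
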